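/- arXiv:2411.00182 — 2 statements merged into one kernel-verified Lean document; each statement's English description precedes it below -/
import Mathlib

section
/- Given η̂ ∈ C_c(X×Γ, H), define ξ : X → H by ξ(x) = ∑_{μ∈Γ} π_x(μ·c)(U_μ(η̂(μ⁻¹x, μ⁻¹))) (a finite sum). Then for every (x,γ) ∈ X×Γ one has π_x(c)(U_γ(ξ(γ⁻¹x))) = ∑_{μ∈Γ} π_x(c·(μ·c))(U_μ(η̂(μ⁻¹x, μ⁻¹γ))); that is, φ(ξ) = (π⋊Γ)(e)(η̂), where φ(ξ)(x,γ) = π_x(c)(U_γ(ξ(γ⁻¹x))). This proves surjectivity of φ onto the range of the Mishchenko projection at the level of compactly supported elements. -/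
/-!
Equivariance lets `U_γ` move past `π_{γ⁻¹x}` at the price of translating its argument by `γ`, so
`π_x(c) U_γ π_{γ⁻¹x}(μ·c) U_μ = π_x(c·(γμ·c)) U_{γμ}`. Hence applying `π_x(c) U_γ` to the series
`ξ(γ⁻¹x)` gives, term by term, the series of the Mishchenko operator, reindexed by `μ ↦ γμ`.
-/

/-- A right action of `Γ` on `Z` by continuous maps, written as a function `ρ z γ = zγ`. -/
structure IsContinuousRightAction {Γ Z : Type*} [Group Γ] [TopologicalSpace Z]
    (ρ : Z → Γ → Z) : Prop where
  one : ∀ z, ρ z 1 = z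
  mul : ∀ (z : Z) (γ μ : Γ), ρ (ρ z γ) μ = ρ z (γ * μ)
  continuous : ∀ γ : Γ, Continuous fun z => ρ z γ

/-- The function `γ·f`, that is `z ↦ f (zγ)`: the left action on functions induced by the right
action `ρ`. -/
def rightTranslate {Γ Z R : Type*} (ρ : Z → Γ → Z) (γ : Γ) (f : Z → R) : Z → R :=
  fun z => f (ρ z γ)

/-- A `Γ`-equivariant family `π` of multiplicative maps from the compactly supported continuous
functions on `Z` to a monoid `E` (usually that of operators on a Hilbert space). Each `π x` takes
arbitrary functions as arguments, but nothing is required outside the compactly supported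
continuous ones. -/
structure IsEquivariantFamily {Γ Z X R E : Type*} [Group Γ] [TopologicalSpace Z] [MulAction Γ X]
    [TopologicalSpace R] [MulZeroClass R] [Monoid E]
    (ρ : Z → Γ → Z) (U : Γ →* E) (π : X → (Z → R) → E) : Prop where
  mul : ∀ (x : X) (f g : Z → R), Continuous f → HasCompactSupport f →
    Continuous g → HasCompactSupport g → π x (f * g) = π x f * π x g
  equivariant : ∀ (γ : Γ) (x : X) (f : Z → R), Continuous f → HasCompactSupport f →
    π (γ • x) f = U γ * π x (rightTranslate ρ γ⁻¹ f) * U γ⁻¹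

namespace IsContinuousRightAction

variable {Γ Z R : Type*} [Group Γ] [TopologicalSpace Z] {ρ : Z → Γ → Z}

/-- Right translation `z ↦ zγ` as a homeomorphism, with inverse `z ↦ zγ⁻¹`; it transports
compactness of supports. -/
def homeomorph (hρ : IsContinuousRightAction ρ) (γ : Γ) : Z ≃ₜ Z where
  toFun z := ρ z γ
  invFun z := ρ z γ⁻¹
  left_inv z := by simp only [hρ.mul, mul_inv_cancel, hρ.one]
  right_inv z := by simp only [hρ.mul, inv_mul_cancel, hρ.one]
  continuous_toFun := hρ.continuous γ
  continuous_invFun := hρ.continuous γ⁻¹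

theorem rightTranslate_rightTranslate (hρ : IsContinuousRightAction ρ) (γ μ : Γ) (f : Z → R) :
    rightTranslate ρ γ (rightTranslate ρ μ f) = rightTranslate ρ (γ * μ) f :=
  funext fun z => congrArg f (hρ.mul z γ μ)

theorem continuous_rightTranslate [TopologicalSpace R] (hρ : IsContinuousRightAction ρ)
    {f : Z → R} (hf : Continuous f) (γ : Γ) : Continuous (rightTranslate ρ γ f) :=
  hf.comp (hρ.continuous γ)

theorem hasCompactSupport_rightTranslate [Zero R] (hρ : IsContinuousRightAction ρ)
    {f : Z → R} (hf : HasCompactSupport f) (γ : Γ) :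
    HasCompactSupport (rightTranslate ρ γ f) :=
  hf.comp_homeomorph (hρ.homeomorph γ)

end IsContinuousRightAction

namespace IsEquivariantFamily

variable {Γ Z X R E : Type*} [Group Γ] [TopologicalSpace Z] [MulAction Γ X]
  [TopologicalSpace R] [MulZeroClass R] [Monoid E]
  {ρ : Z → Γ → Z} {U : Γ →* E} {π : X → (Z → R) → E}

theorem mul_map_inv_smul (hπ : IsEquivariantFamily ρ U π) {f : Z → R}
    (hf : Continuous f) (hf_supp : HasCompactSupport f) (γ : Γ) (x : X) :
    U γ * π (γ⁻¹ • x) f = π x (rightTranslate ρ γ f) * U γ := by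
  rw [hπ.equivariant γ⁻¹ x f hf hf_supp, inv_inv, ← mul_assoc, ← mul_assoc, ← map_mul,
    mul_inv_cancel, map_one, one_mul]

theorem mul_map_inv_smul_rightTranslate (hρ : IsContinuousRightAction ρ)
    (hπ : IsEquivariantFamily ρ U π) {f g : Z → R}
    (hf : Continuous f) (hf_supp : HasCompactSupport f)
    (hg : Continuous g) (hg_supp : HasCompactSupport g) (γ μ : Γ) (x : X) :
    π x f * U γ * (π (γ⁻¹ • x) (rightTranslate ρ μ g) * U μ) =
      π x (f * rightTranslate ρ (γ * μ) g) * U (γ * μ) := by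
  have hcont := hρ.continuous_rightTranslate hg
  have hsupp := hρ.hasCompactSupport_rightTranslate hg_supp
  calc
    π x f * U γ * (π (γ⁻¹ • x) (rightTranslate ρ μ g) * U μ)
      = π x f * (U γ * π (γ⁻¹ • x) (rightTranslate ρ μ g)) * U μ := by simp only [mul_assoc]
    _ = π x f * (π x (rightTranslate ρ (γ * μ) g) * U γ) * U μ := by
      rw [hπ.mul_map_inv_smul (hcont μ) (hsupp μ), hρ.rightTranslate_rightTranslate]
    _ = π x f * π x (rightTranslate ρ (γ * μ) g) * U (γ * μ) := by
      simp only [map_mul, mul_assoc]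
    _ = π x (f * rightTranslate ρ (γ * μ) g) * U (γ * μ) := by
      rw [hπ.mul x f _ hf hf_supp (hcont _) (hsupp _)]

end IsEquivariantFamily

theorem phi_surjective_onto_mishchenko_range_general
    {Γ Z X R 𝕜 H : Type*} [Group Γ] [TopologicalSpace Z] [MulAction Γ X]
    [TopologicalSpace R] [MulZeroClass R]
    [Semiring 𝕜] [TopologicalSpace H] [AddCommMonoid H] [Module 𝕜 H]
    {ρ : Z → Γ → Z} (hρ : IsContinuousRightAction ρ)
    {U : Γ →* (H →L[𝕜] H)} {π : X → (Z → R) → (H →L[𝕜] H)} (hπ : IsEquivariantFamily ρ U π)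
    {b c : Z → R} (hb : Continuous b) (hb_supp : HasCompactSupport b)
    (hc : Continuous c) (hc_supp : HasCompactSupport c)
    {η : X → Γ → H} {ξ : X → H}
    (hξ : ∀ x, HasSum (fun μ => π x (rightTranslate ρ μ c) (U μ (η (μ⁻¹ • x) μ⁻¹))) (ξ x))
    (x : X) (γ : Γ) :
    HasSum (fun μ => π x (b * rightTranslate ρ μ c) (U μ (η (μ⁻¹ • x) (μ⁻¹ * γ))))
      (π x b (U γ (ξ (γ⁻¹ • x)))) := by
  have operator_identity (μ : Γ) (v : H) :
      (π x b * U γ) (π (γ⁻¹ • x) (rightTranslate ρ μ c) (U μ v)) =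
        π x (b * rightTranslate ρ (γ * μ) c) (U (γ * μ) v) :=
    DFunLike.congr_fun (hπ.mul_map_inv_smul_rightTranslate hρ hb hb_supp hc hc_supp γ μ x) v
  rw [← (Equiv.mulLeft γ).hasSum_iff]
  refine ((hξ (γ⁻¹ • x)).mapL (π x b * U γ)).congr_fun fun μ => ?_
  simp only [operator_identity, Function.comp_apply, Equiv.coe_mulLeft, mul_inv_rev, mul_smul,
    inv_mul_cancel_right]

/-- Given `η̂ ∈ C_c(X×Γ, H)`, the element `ξ(x) = ∑_μ π_x(μ·c)(U_μ(η̂(μ⁻¹x, μ⁻¹)))`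
satisfies `φ(ξ) = (π⋊Γ)(e)(η̂)`: for every `(x,γ)`,
`π_x(c)(U_γ(ξ(γ⁻¹x))) = ∑_μ π_x(c·(μ·c))(U_μ(η̂(μ⁻¹x, μ⁻¹γ)))`
(surjectivity of `φ` onto the range of the Mishchenko projection on compactly
supported elements). -/
theorem phi_surjective_onto_mishchenko_range
    {Γ : Type*} [Group Γ]
    {Z : Type*} [TopologicalSpace Z] [LocallyCompactSpace Z] [T2Space Z]
    {X : Type*} [TopologicalSpace X] [CompactSpace X] [T2Space X] [MulAction Γ X]
    {H : Type*} [NormedAddCommGroup H] [InnerProductSpace ℂ H] [CompleteSpace H]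
    (ρ : Z → Γ → Z)
    (hρ_one : ∀ z, ρ z 1 = z)
    (hρ_mul : ∀ (z : Z) (γ μ : Γ), ρ (ρ z γ) μ = ρ z (γ * μ))
    (hρ_cont : ∀ γ : Γ, Continuous fun z => ρ z γ)
    (hρ_proper : ∀ K L : Set Z, IsCompact K → IsCompact L →
      {γ : Γ | ∃ z ∈ K, ρ z γ ∈ L}.Finite)
    (hX_cont : ∀ γ : Γ, Continuous fun x : X => γ • x)
    (c : Z → ℝ) (hc_cont : Continuous c) (hc_supp : HasCompactSupport c)
    (hc_mem : ∀ z, c z ∈ Set.Icc (0 : ℝ) 1)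
    (hc_sum : ∀ z, HasSum (fun γ : Γ => c (ρ z γ) ^ 2) 1)
    (U : Γ →* (H ≃ₗᵢ[ℂ] H))
    (π : X → (Z → ℂ) → (H →L[ℂ] H))
    (hπ_add : ∀ (x : X) (f g : Z → ℂ), Continuous f → HasCompactSupport f →
      Continuous g → HasCompactSupport g → π x (f + g) = π x f + π x g)
    (hπ_mul : ∀ (x : X) (f g : Z → ℂ), Continuous f → HasCompactSupport f →
      Continuous g → HasCompactSupport g → π x (f * g) = (π x f).comp (π x g))
    (hπ_star : ∀ (x : X) (f : Z → ℂ), Continuous f → HasCompactSupport f →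
      π x (fun z => (starRingEnd ℂ) (f z)) = ContinuousLinearMap.adjoint (π x f))
    (hπ_equiv : ∀ (γ : Γ) (x : X) (f : Z → ℂ) (v : H),
      π (γ • x) f v = U γ (π x (fun z => f (ρ z γ⁻¹)) (U γ⁻¹ v)))
    (η : X → Γ → H) (F : Finset Γ)
    (hηF : ∀ (x : X) (γ : Γ), γ ∉ F → η x γ = 0)
    (hη_cont : ∀ γ : Γ, Continuous fun x => η x γ)
    (ξ : X → H)
    (hξ : ∀ x : X,
      HasSum (fun μ : Γ =>
        π x (fun z => (c (ρ z μ) : ℂ)) (U μ (η (μ⁻¹ • x) μ⁻¹))) (ξ x)) :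
    ∀ (x : X) (γ : Γ),
      HasSum (fun μ : Γ =>
          π x (fun z => (c z : ℂ) * (c (ρ z μ) : ℂ)) (U μ (η (μ⁻¹ • x) (μ⁻¹ * γ))))
        (π x (fun z => (c z : ℂ)) (U γ (ξ (γ⁻¹ • x)))) :=
  phi_surjective_onto_mishchenko_range_general ⟨hρ_one, hρ_mul, hρ_cont⟩
    (U := (unitary (H →L[ℂ] H)).subtype.comp (Unitary.linearIsometryEquiv.symm.toMonoidHom.comp U))
    ⟨hπ_mul, fun γ x f _ _ => ContinuousLinearMap.ext (hπ_equiv γ x f)⟩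
    (Complex.continuous_ofReal.comp hc_cont) (hc_supp.comp_left Complex.ofReal_zero)
    (Complex.continuous_ofReal.comp hc_cont) (hc_supp.comp_left Complex.ofReal_zero) hξ
end

section
/- With W₀ξ̂(x,γ) = π'_x(c)(V_x(𝒫ξ̂(x,γ))), one has (π'⋊Γ)(e) ∘ W₀ = W₀ = W₀ ∘ (π⋊Γ)(e) on C_c(X×Γ, H): explicitly, for every ξ̂ ∈ C_c(X×Γ, H) and (x,γ), the finite sum ∑_{μ∈Γ} π'_x(c·(μ·c))(U'_μ(W₀ξ̂(μ⁻¹x, μ⁻¹γ))) equals W₀ξ̂(x,γ), and W₀((π⋊Γ)(e)ξ̂)(x,γ) = W₀ξ̂(x,γ). Hence W₀ maps the range of the Mishchenko projection for (π,U) into the range of the Mishchenko projection for (π',U'). -/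
/-- The averaging map `𝒫`: `𝒫ξ̂(x,γ) = ∑_μ π_x(μ·c)(U_μ(ξ̂(μ⁻¹x, μ⁻¹γ)))`. -/
noncomputable def avgP {Γ X Z H : Type*} [Group Γ] [MulAction Γ X]
    [NormedAddCommGroup H] [InnerProductSpace ℂ H]
    (π : X → (Z → ℂ) → (H →L[ℂ] H)) (U : Γ →* (H ≃ₗᵢ[ℂ] H))
    (ρ : Z → Γ → Z) (c : Z → ℝ) (ξ : X → Γ → H) (x : X) (γ : Γ) : H :=
  ∑' μ : Γ, π x (fun z => (c (ρ z μ) : ℂ)) (U μ (ξ (μ⁻¹ • x) (μ⁻¹ * γ)))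

/-- The Mishchenko projection acting on `C_c(X×Γ, H)`:
`((π⋊Γ)(e)ξ̂)(x,γ) = ∑_μ π_x(c·(μ·c))(U_μ(ξ̂(μ⁻¹x, μ⁻¹γ)))`. -/
noncomputable def mishAct {Γ X Z H : Type*} [Group Γ] [MulAction Γ X]
    [NormedAddCommGroup H] [InnerProductSpace ℂ H]
    (π : X → (Z → ℂ) → (H →L[ℂ] H)) (U : Γ →* (H ≃ₗᵢ[ℂ] H))
    (ρ : Z → Γ → Z) (c : Z → ℝ) (ξ : X → Γ → H) (x : X) (γ : Γ) : H :=
  ∑' μ : Γ, π x (fun z => (c z : ℂ) * (c (ρ z μ) : ℂ)) (U μ (ξ (μ⁻¹ • x) (μ⁻¹ * γ)))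

/-- The operator `W₀ξ̂(x,γ) = π'_x(c)(V_x(𝒫ξ̂(x,γ)))`. -/
noncomputable def W0map {Γ X Z H H' : Type*} [Group Γ] [MulAction Γ X]
    [NormedAddCommGroup H] [InnerProductSpace ℂ H]
    [NormedAddCommGroup H'] [InnerProductSpace ℂ H']
    (π' : X → (Z → ℂ) → (H' →L[ℂ] H')) (V : X → (H →L[ℂ] H'))
    (π : X → (Z → ℂ) → (H →L[ℂ] H)) (U : Γ →* (H ≃ₗᵢ[ℂ] H))
    (ρ : Z → Γ → Z) (c : Z → ℝ) (ξ : X → Γ → H) (x : X) (γ : Γ) : H' :=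
  π' x (fun z => (c z : ℂ)) (V x (avgP π U ρ c ξ x γ))

/-!
Let `J η (x, γ) = π_x(c) (η (x, γ))`. Multiplicativity of `π_x` gives `(π ⋊ Γ)(e) = J ∘ 𝒫`, while
the functions `𝒫 ξ̂` are invariant under the diagonal action of `Γ`, and on invariant functions
`𝒫 ∘ J` is the sum of the `π_x((μ·c)²)`, hence the identity. As `W₀ = J' ∘ V ∘ 𝒫` and `V` preserves
invariance, `J' 𝒫' (J' V 𝒫) = J' V 𝒫` and `(J' V 𝒫) J 𝒫 = J' V 𝒫`.
-/

section Translation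

variable {Γ Z R A : Type*} [Group Γ] {ρ : Z → Γ → Z}

theorem hasCompactSupport_translate [TopologicalSpace Z] [Zero R]
    (hρ_one : ∀ z, ρ z 1 = z) (hρ_mul : ∀ (z : Z) (γ μ : Γ), ρ (ρ z γ) μ = ρ z (γ * μ))
    (hρ_cont : ∀ γ : Γ, Continuous fun z => ρ z γ)
    {f : Z → R} (hf : HasCompactSupport f) (μ : Γ) :
    HasCompactSupport fun z => f (ρ z μ) :=
  hf.comp_homeomorph
    { toFun := fun z => ρ z μ
      invFun := fun z => ρ z μ⁻¹
      left_inv := fun z => by simp only [hρ_mul, mul_inv_cancel, hρ_one]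
      right_inv := fun z => by simp only [hρ_mul, inv_mul_cancel, hρ_one]
      continuous_toFun := hρ_cont μ
      continuous_invFun := hρ_cont μ⁻¹ }

theorem map_ofReal_mul_translate [TopologicalSpace Z] [Mul A]
    (hρ_one : ∀ z, ρ z 1 = z) (hρ_mul : ∀ (z : Z) (γ μ : Γ), ρ (ρ z γ) μ = ρ z (γ * μ))
    (hρ_cont : ∀ γ : Γ, Continuous fun z => ρ z γ)
    {c : Z → ℝ} (hc_cont : Continuous c) (hc_supp : HasCompactSupport c)
    {Φ : (Z → ℂ) → A}
    (hΦ : ∀ f g : Z → ℂ, Continuous f → HasCompactSupport f →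
      Continuous g → HasCompactSupport g → Φ (f * g) = Φ f * Φ g) (μ : Γ) :
    Φ (fun z => (c z : ℂ) * (c (ρ z μ) : ℂ)) =
      Φ (fun z => (c z : ℂ)) * Φ (fun z => (c (ρ z μ) : ℂ)) := by
  have hcont : Continuous fun z => (c z : ℂ) := Complex.continuous_ofReal.comp hc_cont
  have hsupp : HasCompactSupport fun z => (c z : ℂ) :=
    hc_supp.comp_left (g := Complex.ofReal) Complex.ofReal_zero
  exact hΦ _ _ hcont hsupp (hcont.comp (hρ_cont μ))
    (hasCompactSupport_translate hρ_one hρ_mul hρ_cont hsupp μ)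

theorem map_ofReal_sq_of_map_mul_translate_one [Mul A]
    (hρ_one : ∀ z, ρ z 1 = z) {c : Z → ℝ} {Φ : (Z → ℂ) → A}
    (hΦ : Φ (fun z => (c z : ℂ) * (c (ρ z 1) : ℂ)) =
      Φ (fun z => (c z : ℂ)) * Φ (fun z => (c (ρ z 1) : ℂ))) :
    Φ (fun z => (c z : ℂ) ^ 2) = Φ (fun z => (c z : ℂ)) * Φ (fun z => (c z : ℂ)) := by
  simpa only [hρ_one, ← sq] using hΦ

end Translation

section Averaging

variable {Γ X Z H H' : Type*} [Group Γ] [MulAction Γ X]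
  [NormedAddCommGroup H] [InnerProductSpace ℂ H] [NormedAddCommGroup H'] [InnerProductSpace ℂ H']
  {ρ : Z → Γ → Z} {c : Z → ℝ} {U : Γ →* (H ≃ₗᵢ[ℂ] H)} {U' : Γ →* (H' ≃ₗᵢ[ℂ] H')}
  {π : X → (Z → ℂ) → (H →L[ℂ] H)}

/-- Covariance of a family `π` with respect to `U`: `U_μ ∘ π_{μ⁻¹x}(f) = π_x(μ·f) ∘ U_μ`. This is
`Γ`-equivariance of `π`, arranged so that `U` can be moved past `π`. -/
def IsCovariantFamily (ρ : Z → Γ → Z) (U : Γ →* (H ≃ₗᵢ[ℂ] H)) (π : X → (Z → ℂ) → (H →L[ℂ] H)) :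
    Prop :=
  ∀ (μ : Γ) (x : X) (f : Z → ℂ) (v : H),
    U μ (π (μ⁻¹ • x) f v) = π x (fun z => f (ρ z μ)) (U μ v)

/-- Invariance of `η : X × Γ → H` under the diagonal action
`(μ·η)(x, γ) = U_μ(η(μ⁻¹x, μ⁻¹γ))`, the property shared by all functions `𝒫ξ̂`. -/
def IsDiagonalInvariant (U : Γ →* (H ≃ₗᵢ[ℂ] H)) (η : X → Γ → H) : Prop :=
  ∀ (μ : Γ) (x : X) (γ : Γ), U μ (η (μ⁻¹ • x) (μ⁻¹ * γ)) = η x γ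

theorem IsCovariantFamily.of_equivariant
    (hρ_one : ∀ z, ρ z 1 = z) (hρ_mul : ∀ (z : Z) (γ μ : Γ), ρ (ρ z γ) μ = ρ z (γ * μ))
    (hπ_equiv : ∀ (γ : Γ) (x : X) (f : Z → ℂ) (v : H),
      π (γ • x) f v = U γ (π x (fun z => f (ρ z γ⁻¹)) (U γ⁻¹ v))) :
    IsCovariantFamily ρ U π := by
  intro μ x f v
  have h := hπ_equiv μ (μ⁻¹ • x) (fun z => f (ρ z μ)) (U μ v)
  simpa [hρ_mul, hρ_one] using h.symm

theorem IsDiagonalInvariant.map {V : X → (H →L[ℂ] H')}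
    (hV_equiv : ∀ (γ : Γ) (x : X) (v : H), V (γ • x) v = U' γ (V x (U γ⁻¹ v)))
    {η : X → Γ → H} (hη : IsDiagonalInvariant U η) :
    IsDiagonalInvariant U' fun x γ => V x (η x γ) := by
  intro μ x γ
  have h := hV_equiv μ (μ⁻¹ • x) (U μ (η (μ⁻¹ • x) (μ⁻¹ * γ)))
  rw [smul_inv_smul, hη μ x γ] at h
  simpa [← hη μ x γ] using h.symm

theorem IsCovariantFamily.isDiagonalInvariant_avgP (hπ : IsCovariantFamily ρ U π)
    (hρ_mul : ∀ (z : Z) (γ μ : Γ), ρ (ρ z γ) μ = ρ z (γ * μ)) (ξ : X → Γ → H) :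
    IsDiagonalInvariant U (avgP π U ρ c ξ) := by
  intro μ x γ
  let summand (ν : Γ) : H := π x (fun z => (c (ρ z ν) : ℂ)) (U ν (ξ (ν⁻¹ • x) (ν⁻¹ * γ)))
  have hsummand (ν : Γ) : U μ (π (μ⁻¹ • x) (fun z => (c (ρ z ν) : ℂ))
      (U ν (ξ (ν⁻¹ • μ⁻¹ • x) (ν⁻¹ * (μ⁻¹ * γ))))) = summand (μ * ν) := by
    rw [hπ]
    simp [summand, hρ_mul, mul_smul, mul_assoc]
  calc U μ (avgP π U ρ c ξ (μ⁻¹ • x) (μ⁻¹ * γ))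
    _ = ∑' ν, summand (μ * ν) :=
      (U μ).toContinuousLinearEquiv.map_tsum.trans (tsum_congr hsummand)
    _ = avgP π U ρ c ξ x γ := (Equiv.mulLeft μ).tsum_eq summand

theorem IsCovariantFamily.hasSum_avgP_cutoff_of_isDiagonalInvariant (hπ : IsCovariantFamily ρ U π)
    (hπ_sq : ∀ x : X, π x (fun z => (c z : ℂ) ^ 2) =
      (π x fun z => (c z : ℂ)).comp (π x fun z => (c z : ℂ)))
    (hπ_sum : ∀ (x : X) (v : H),
      HasSum (fun γ : Γ => π x (fun z => (c (ρ z γ) : ℂ) ^ 2) v) v)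
    {η : X → Γ → H} (hη : IsDiagonalInvariant U η) (x : X) (γ : Γ) :
    HasSum (fun μ : Γ => π x (fun z => (c (ρ z μ) : ℂ))
      (U μ (π (μ⁻¹ • x) (fun z => (c z : ℂ)) (η (μ⁻¹ • x) (μ⁻¹ * γ))))) (η x γ) := by
  refine (hπ_sum x (η x γ)).congr_fun fun μ => ?_
  let y := μ⁻¹ • x
  let v := η y (μ⁻¹ * γ)
  calc π x (fun z => (c (ρ z μ) : ℂ)) (U μ (π y (fun z => (c z : ℂ)) v))
    _ = U μ (π y (fun z => (c z : ℂ)) (π y (fun z => (c z : ℂ)) v)) :=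
      (hπ μ x (fun z => (c z : ℂ)) _).symm
    _ = U μ (π y (fun z => (c z : ℂ) ^ 2) v) := by
      rw [hπ_sq, ContinuousLinearMap.comp_apply]
    _ = π x (fun z => (c (ρ z μ) : ℂ) ^ 2) (U μ v) := hπ μ x (fun z => (c z : ℂ) ^ 2) v
    _ = π x (fun z => (c (ρ z μ) : ℂ) ^ 2) (η x γ) := by rw [hη μ x γ]

theorem hasSum_mishAct_of_hasSum_avgP {x : X}
    (hπ_mul : ∀ μ : Γ, π x (fun z => (c z : ℂ) * (c (ρ z μ) : ℂ)) =
      (π x fun z => (c z : ℂ)).comp (π x fun z => (c (ρ z μ) : ℂ)))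
    {ξ : X → Γ → H} {γ : Γ} {v : H}
    (h : HasSum (fun μ : Γ => π x (fun z => (c (ρ z μ) : ℂ))
      (U μ (ξ (μ⁻¹ • x) (μ⁻¹ * γ)))) v) :
    HasSum (fun μ : Γ => π x (fun z => (c z : ℂ) * (c (ρ z μ) : ℂ))
      (U μ (ξ (μ⁻¹ • x) (μ⁻¹ * γ)))) (π x (fun z => (c z : ℂ)) v) := by
  simpa only [hπ_mul, ContinuousLinearMap.comp_apply] using h.mapL (π x fun z => (c z : ℂ))

theorem summable_avgP_of_eq_zero_of_notMem {ξ : X → Γ → H} {F : Finset Γ}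
    (hξ : ∀ (x : X) (γ : Γ), γ ∉ F → ξ x γ = 0) (x : X) (γ : Γ) :
    Summable fun μ : Γ => π x (fun z => (c (ρ z μ) : ℂ)) (U μ (ξ (μ⁻¹ • x) (μ⁻¹ * γ))) := by
  have hinj : Function.Injective fun μ : Γ => μ⁻¹ * γ :=
    (mul_left_injective γ).comp inv_injective
  refine summable_of_hasFiniteSupport ((F.finite_toSet.preimage hinj.injOn).subset fun μ hμ => ?_)
  by_contra hF
  exact hμ (by simp only [hξ _ (μ⁻¹ * γ) hF, map_zero])

theorem IsCovariantFamily.avgP_mishAct (hπ : IsCovariantFamily ρ U π)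
    (hρ_one : ∀ z, ρ z 1 = z) (hρ_mul : ∀ (z : Z) (γ μ : Γ), ρ (ρ z γ) μ = ρ z (γ * μ))
    (hπ_mul : ∀ (x : X) (μ : Γ), π x (fun z => (c z : ℂ) * (c (ρ z μ) : ℂ)) =
      (π x fun z => (c z : ℂ)).comp (π x fun z => (c (ρ z μ) : ℂ)))
    (hπ_sum : ∀ (x : X) (v : H),
      HasSum (fun γ : Γ => π x (fun z => (c (ρ z γ) : ℂ) ^ 2) v) v)
    {ξ : X → Γ → H}
    (hξ : ∀ (x : X) (γ : Γ), Summable fun μ : Γ =>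
      π x (fun z => (c (ρ z μ) : ℂ)) (U μ (ξ (μ⁻¹ • x) (μ⁻¹ * γ)))) :
    avgP π U ρ c (mishAct π U ρ c ξ) = avgP π U ρ c ξ := by
  have hfactor : mishAct π U ρ c ξ = fun x γ => π x (fun z => (c z : ℂ)) (avgP π U ρ c ξ x γ) :=
    funext₂ fun x γ => (hasSum_mishAct_of_hasSum_avgP (hπ_mul x) (hξ x γ).hasSum).tsum_eq
  rw [hfactor]
  exact funext₂ fun x γ => (hπ.hasSum_avgP_cutoff_of_isDiagonalInvariant
    (fun x => map_ofReal_sq_of_map_mul_translate_one hρ_one (hπ_mul x 1)) hπ_sum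
    (hπ.isDiagonalInvariant_avgP hρ_mul ξ) x γ).tsum_eq

end Averaging

theorem W0_intertwines_mishchenko_projections_general
    {Γ Z X H H' : Type*} [Group Γ] [MulAction Γ X]
    [NormedAddCommGroup H] [InnerProductSpace ℂ H]
    [NormedAddCommGroup H'] [InnerProductSpace ℂ H']
    {ρ : Z → Γ → Z} {c : Z → ℝ} {U : Γ →* (H ≃ₗᵢ[ℂ] H)} {U' : Γ →* (H' ≃ₗᵢ[ℂ] H')}
    {π : X → (Z → ℂ) → (H →L[ℂ] H)} {π' : X → (Z → ℂ) → (H' →L[ℂ] H')} {V : X → (H →L[ℂ] H')}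
    (hρ_one : ∀ z, ρ z 1 = z) (hρ_mul : ∀ (z : Z) (γ μ : Γ), ρ (ρ z γ) μ = ρ z (γ * μ))
    (hπ_mul : ∀ (x : X) (μ : Γ), π x (fun z => (c z : ℂ) * (c (ρ z μ) : ℂ)) =
      (π x fun z => (c z : ℂ)).comp (π x fun z => (c (ρ z μ) : ℂ)))
    (hπ_equiv : ∀ (γ : Γ) (x : X) (f : Z → ℂ) (v : H),
      π (γ • x) f v = U γ (π x (fun z => f (ρ z γ⁻¹)) (U γ⁻¹ v)))
    (hπ_sum : ∀ (x : X) (v : H),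
      HasSum (fun γ : Γ => π x (fun z => (c (ρ z γ) : ℂ) ^ 2) v) v)
    (hπ'_mul : ∀ (x : X) (μ : Γ), π' x (fun z => (c z : ℂ) * (c (ρ z μ) : ℂ)) =
      (π' x fun z => (c z : ℂ)).comp (π' x fun z => (c (ρ z μ) : ℂ)))
    (hπ'_equiv : ∀ (γ : Γ) (x : X) (f : Z → ℂ) (w : H'),
      π' (γ • x) f w = U' γ (π' x (fun z => f (ρ z γ⁻¹)) (U' γ⁻¹ w)))
    (hπ'_sum : ∀ (x : X) (w : H'),
      HasSum (fun γ : Γ => π' x (fun z => (c (ρ z γ) : ℂ) ^ 2) w) w)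
    (hV_equiv : ∀ (γ : Γ) (x : X) (v : H), V (γ • x) v = U' γ (V x (U γ⁻¹ v)))
    {ξ : X → Γ → H}
    (hξ : ∀ (x : X) (γ : Γ), Summable fun μ : Γ =>
      π x (fun z => (c (ρ z μ) : ℂ)) (U μ (ξ (μ⁻¹ • x) (μ⁻¹ * γ))))
    (x : X) (γ : Γ) :
    HasSum (fun μ : Γ =>
        π' x (fun z => (c z : ℂ) * (c (ρ z μ) : ℂ))
          (U' μ (W0map π' V π U ρ c ξ (μ⁻¹ • x) (μ⁻¹ * γ))))
      (W0map π' V π U ρ c ξ x γ) ∧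
    W0map π' V π U ρ c (mishAct π U ρ c ξ) x γ = W0map π' V π U ρ c ξ x γ := by
  have hπ : IsCovariantFamily ρ U π := .of_equivariant hρ_one hρ_mul hπ_equiv
  have hπ' : IsCovariantFamily ρ U' π' := .of_equivariant hρ_one hρ_mul hπ'_equiv
  have hinv : IsDiagonalInvariant U' fun x γ => V x (avgP π U ρ c ξ x γ) :=
    (hπ.isDiagonalInvariant_avgP hρ_mul ξ).map hV_equiv
  constructor
  · exact hasSum_mishAct_of_hasSum_avgP (hπ'_mul x)
      (hπ'.hasSum_avgP_cutoff_of_isDiagonalInvariant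
        (fun x => map_ofReal_sq_of_map_mul_translate_one hρ_one (hπ'_mul x 1)) hπ'_sum hinv x γ)
  · rw [W0map, W0map, hπ.avgP_mishAct hρ_one hρ_mul hπ_mul hπ_sum hξ]

/-- `(π'⋊Γ)(e) ∘ W₀ = W₀ = W₀ ∘ (π⋊Γ)(e)` on `C_c(X×Γ, H)`: the finite sum
`∑_μ π'_x(c·(μ·c))(U'_μ(W₀ξ̂(μ⁻¹x, μ⁻¹γ)))` equals `W₀ξ̂(x,γ)`, and
`W₀((π⋊Γ)(e)ξ̂)(x,γ) = W₀ξ̂(x,γ)`; thus `W₀` maps the range of the Mishchenko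
projection for `(π,U)` into that for `(π',U')`. -/
theorem W0_intertwines_mishchenko_projections
    {Γ : Type*} [Group Γ]
    {Z : Type*} [TopologicalSpace Z] [LocallyCompactSpace Z] [T2Space Z]
    {X : Type*} [TopologicalSpace X] [CompactSpace X] [T2Space X] [MulAction Γ X]
    {H : Type*} [NormedAddCommGroup H] [InnerProductSpace ℂ H] [CompleteSpace H]
    {H' : Type*} [NormedAddCommGroup H'] [InnerProductSpace ℂ H'] [CompleteSpace H']
    (ρ : Z → Γ → Z)
    (hρ_one : ∀ z, ρ z 1 = z)
    (hρ_mul : ∀ (z : Z) (γ μ : Γ), ρ (ρ z γ) μ = ρ z (γ * μ))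
    (hρ_cont : ∀ γ : Γ, Continuous fun z => ρ z γ)
    (hρ_proper : ∀ K L : Set Z, IsCompact K → IsCompact L →
      {γ : Γ | ∃ z ∈ K, ρ z γ ∈ L}.Finite)
    (hX_cont : ∀ γ : Γ, Continuous fun x : X => γ • x)
    (c : Z → ℝ) (hc_cont : Continuous c) (hc_supp : HasCompactSupport c)
    (hc_mem : ∀ z, c z ∈ Set.Icc (0 : ℝ) 1)
    (hc_sum : ∀ z, HasSum (fun γ : Γ => c (ρ z γ) ^ 2) 1)
    (U : Γ →* (H ≃ₗᵢ[ℂ] H))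
    (π : X → (Z → ℂ) → (H →L[ℂ] H))
    (hπ_add : ∀ (x : X) (f g : Z → ℂ), Continuous f → HasCompactSupport f →
      Continuous g → HasCompactSupport g → π x (f + g) = π x f + π x g)
    (hπ_mul : ∀ (x : X) (f g : Z → ℂ), Continuous f → HasCompactSupport f →
      Continuous g → HasCompactSupport g → π x (f * g) = (π x f).comp (π x g))
    (hπ_star : ∀ (x : X) (f : Z → ℂ), Continuous f → HasCompactSupport f →
      π x (fun z => (starRingEnd ℂ) (f z)) = ContinuousLinearMap.adjoint (π x f))
    (hπ_equiv : ∀ (γ : Γ) (x : X) (f : Z → ℂ) (v : H),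
      π (γ • x) f v = U γ (π x (fun z => f (ρ z γ⁻¹)) (U γ⁻¹ v)))
    (hπ_sum : ∀ (x : X) (v : H),
      HasSum (fun γ : Γ => π x (fun z => (c (ρ z γ) : ℂ) ^ 2) v) v)
    (U' : Γ →* (H' ≃ₗᵢ[ℂ] H'))
    (π' : X → (Z → ℂ) → (H' →L[ℂ] H'))
    (hπ'_add : ∀ (x : X) (f g : Z → ℂ), Continuous f → HasCompactSupport f →
      Continuous g → HasCompactSupport g → π' x (f + g) = π' x f + π' x g)
    (hπ'_mul : ∀ (x : X) (f g : Z → ℂ), Continuous f → HasCompactSupport f →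
      Continuous g → HasCompactSupport g → π' x (f * g) = (π' x f).comp (π' x g))
    (hπ'_star : ∀ (x : X) (f : Z → ℂ), Continuous f → HasCompactSupport f →
      π' x (fun z => (starRingEnd ℂ) (f z)) = ContinuousLinearMap.adjoint (π' x f))
    (hπ'_equiv : ∀ (γ : Γ) (x : X) (f : Z → ℂ) (w : H'),
      π' (γ • x) f w = U' γ (π' x (fun z => f (ρ z γ⁻¹)) (U' γ⁻¹ w)))
    (hπ'_sum : ∀ (x : X) (w : H'),
      HasSum (fun γ : Γ => π' x (fun z => (c (ρ z γ) : ℂ) ^ 2) w) w)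
    (V : X → (H →L[ℂ] H'))
    (hV_equiv : ∀ (γ : Γ) (x : X) (v : H),
      V (γ • x) v = U' γ (V x (U γ⁻¹ v))) :
    ∀ (ξ : X → Γ → H) (F : Finset Γ),
      (∀ (x : X) (γ : Γ), γ ∉ F → ξ x γ = 0) →
      (∀ γ : Γ, Continuous fun x => ξ x γ) →
      ∀ (x : X) (γ : Γ),
        HasSum (fun μ : Γ =>
            π' x (fun z => (c z : ℂ) * (c (ρ z μ) : ℂ))
              (U' μ (W0map π' V π U ρ c ξ (μ⁻¹ • x) (μ⁻¹ * γ))))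
          (W0map π' V π U ρ c ξ x γ) ∧
        W0map π' V π U ρ c (mishAct π U ρ c ξ) x γ = W0map π' V π U ρ c ξ x γ :=
  fun _ _ hξ _ => W0_intertwines_mishchenko_projections_general hρ_one hρ_mul
    (fun x => map_ofReal_mul_translate hρ_one hρ_mul hρ_cont hc_cont hc_supp (hπ_mul x))
    hπ_equiv hπ_sum
    (fun x => map_ofReal_mul_translate hρ_one hρ_mul hρ_cont hc_cont hc_supp (hπ'_mul x))
    hπ'_equiv hπ'_sum hV_equiv (summable_avgP_of_eq_zero_of_notMem hξ)
end
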